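/- arXiv:1307.4229 — 7 statements merged into one kernel-verified Lean document; each statement's English description precedes it below -/
import Mathlib

section
/- Let k ≥ 3, s ≥ 1 be integers and fix integers m₁, m₂, m₃ with 3 ≤ mⱼ ≤ k for j = 1,2,3. Then the number of ordered 4-tuples (f₁, f₂, f₃, f₄) of functions Fin k → Fin s whose associated transversals S₁, S₂, S₃, S₄ satisfy |S₁ ∩ S₂ ∩ S₃ ∩ S₄| ≥ 3, |S₁ ∩ S₂| = m₁, |(S₁ ∪ S₂) ∩ S₃| = m₂, and |(S₁ ∪ S₂ ∪ S₃) ∩ S₄| = m₃ is at most C(k,3) · s^{4k − m₁ − m₂ − m₃} · ∏_{j=1}^{3} C(jk, mⱼ − 3). -/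
/-- The transversal associated to a function `f : Fin k → Fin s`:
it picks the vertex `(i, f i)` in the `i`-th class. -/
def transversalOf {k s : ℕ} (f : Fin k → Fin s) : Finset (Fin k × Fin s) :=
  Finset.image (fun i => (i, f i)) Finset.univ

theorem mem_tr {k s : ℕ} (f : Fin k → Fin s) (p : Fin k × Fin s) :
    p ∈ transversalOf f ↔ f p.1 = p.2 := by
  unfold transversalOf
  simp only [Finset.mem_image, Finset.mem_univ, true_and]
  constructor
  · rintro ⟨i, rfl⟩; rfl
  · intro h; exact ⟨p.1, by rw [h]⟩

theorem card_tr {k s : ℕ} (f : Fin k → Fin s) : (transversalOf f).card = k := by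
  unfold transversalOf
  rw [Finset.card_image_of_injective _ (fun a b h => (Prod.ext_iff.1 h).1)]
  simp

theorem card_agree {k s : ℕ} (g : Fin k → Fin s) (A : Finset (Fin k)) :
    (Finset.univ.filter (fun f : Fin k → Fin s => ∀ i ∈ A, f i = g i)).card
      ≤ s ^ (k - A.card) := by
  have h : (Finset.univ.filter (fun f : Fin k → Fin s => ∀ i ∈ A, f i = g i)) ⊆
      Fintype.piFinset (fun i => if i ∈ A then {g i} else Finset.univ) := by
    intro f hf
    simp only [Finset.mem_filter, Finset.mem_univ, true_and] at hf
    rw [Fintype.mem_piFinset]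
    intro i
    by_cases hi : i ∈ A
    · simp [hi, hf i hi]
    · simp [hi]
  refine (Finset.card_le_card h).trans ?_
  rw [Fintype.card_piFinset]
  have h2 : ∀ i : Fin k, (if i ∈ A then ({g i} : Finset (Fin s)) else Finset.univ).card
      = if i ∈ A then 1 else s := by
    intro i; split_ifs <;> simp
  simp only [h2]
  rw [Finset.prod_ite]
  simp only [Finset.prod_const_one, one_mul, Finset.prod_const]
  have h3 : (Finset.univ.filter (fun i => i ∉ A)).card = k - A.card := by
    have h4 : Finset.univ.filter (fun i => i ∉ A) = Aᶜ := by ext; simp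
    rw [h4, Finset.card_compl, Fintype.card_fin]
  rw [h3]

theorem step {k s : ℕ} (U : Finset (Fin k × Fin s)) (n m : ℕ) (hU : U.card ≤ n)
    (T : Finset (Fin k)) (hT : T.card = 3) (g : Fin k → Fin s)
    (hg : ∀ i ∈ T, (i, g i) ∈ U) :
    (Finset.univ.filter (fun f : Fin k → Fin s =>
      (∀ i ∈ T, f i = g i) ∧ (U ∩ transversalOf f).card = m)).card
      ≤ s ^ (k - m) * Nat.choose n (m - 3) := by
  classical
  set W := T.image (fun i => (i, g i)) with hW
  have hWc : W.card = 3 := by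
    rw [hW, Finset.card_image_of_injective _ (fun a b h => (Prod.ext_iff.1 h).1), hT]
  have hmaps : ∀ f ∈ (Finset.univ.filter (fun f : Fin k → Fin s =>
      (∀ i ∈ T, f i = g i) ∧ (U ∩ transversalOf f).card = m)),
      U ∩ transversalOf f ∈ (U.powersetCard (m - 3)).image (fun X => X ∪ W) := by
    intro f hf
    simp only [Finset.mem_filter, Finset.mem_univ, true_and] at hf
    have hsub : W ⊆ U ∩ transversalOf f := by
      intro p hp
      rw [hW, Finset.mem_image] at hp
      obtain ⟨i, hi, rfl⟩ := hp
      rw [Finset.mem_inter, mem_tr]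
      exact ⟨hg i hi, hf.1 i hi⟩
    rw [Finset.mem_image]
    refine ⟨(U ∩ transversalOf f) \ W, ?_, Finset.sdiff_union_of_subset hsub⟩
    rw [Finset.mem_powersetCard]
    refine ⟨Finset.sdiff_subset.trans Finset.inter_subset_left, ?_⟩
    rw [Finset.card_sdiff_of_subset hsub, hf.2, hWc]
  refine (Finset.card_le_mul_card_image_of_maps_to hmaps (s ^ (k - m)) ?_).trans ?_
  · intro X _
    rcases Finset.eq_empty_or_nonempty ((Finset.univ.filter (fun f : Fin k → Fin s =>
      (∀ i ∈ T, f i = g i) ∧ (U ∩ transversalOf f).card = m)).filter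
        (fun f => U ∩ transversalOf f = X)) with h | ⟨f0, h⟩
    · rw [h]; simp
    · simp only [Finset.mem_filter, Finset.mem_univ, true_and] at h
      obtain ⟨⟨_, hc⟩, hX⟩ := h
      have hA : (X.image Prod.fst).card = m := by
        rw [Finset.card_image_of_injOn, ← hX, hc]
        intro p hp q hq hpq
        rw [← hX] at hp hq
        simp only [Finset.coe_inter, Set.mem_inter_iff, Finset.mem_coe, mem_tr] at hp hq
        exact Prod.ext hpq (by rw [← hp.2, ← hq.2, hpq])
      rw [← hA]
      refine (Finset.card_le_card ?_).trans (card_agree f0 (X.image Prod.fst))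
      intro f hf
      simp only [Finset.mem_filter, Finset.mem_univ, true_and] at hf ⊢
      intro i hi
      obtain ⟨p, hp, rfl⟩ := Finset.mem_image.1 hi
      have h1 : p ∈ U ∩ transversalOf f := by rw [hf.2]; exact hp
      have h2 : p ∈ U ∩ transversalOf f0 := by rw [hX]; exact hp
      rw [Finset.mem_inter, mem_tr] at h1 h2
      rw [h1.2, h2.2]
  · refine Nat.mul_le_mul_left _ (Finset.card_image_le.trans ?_)
    rw [Finset.card_powersetCard]
    exact Nat.choose_le_choose _ hU

theorem pairs {α β : Type} [Fintype α] [Fintype β] (P : α → Prop) (Q : α → β → Prop)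
    (N M : ℕ) (hP : {a | P a}.ncard ≤ N) (hQ : ∀ a, P a → {b | Q a b}.ncard ≤ M) :
    {p : α × β | P p.1 ∧ Q p.1 p.2}.ncard ≤ N * M := by
  classical
  rw [Set.ncard_eq_toFinset_card'] at hP ⊢
  rw [mul_comm]
  refine (Finset.card_le_mul_card_image_of_maps_to (f := Prod.fst)
    (t := {a | P a}.toFinset) ?_ M ?_).trans (Nat.mul_le_mul_left _ hP)
  · intro p hp
    simp only [Set.mem_toFinset, Set.mem_ofPred_eq] at hp ⊢
    exact hp.1
  · intro a ha
    have ha' : P a := by simpa using ha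
    refine le_trans ?_ (hQ a ha')
    rw [Set.ncard_eq_toFinset_card']
    refine Finset.card_le_card_of_injOn Prod.snd ?_ ?_
    · rintro ⟨x, y⟩ hp
      simp at hp ⊢
      obtain ⟨⟨_, h⟩, rfl⟩ := hp
      exact h
    · rintro ⟨x, y⟩ hp ⟨x', y'⟩ hp' h
      simp at hp hp' h ⊢
      exact ⟨hp.2.trans hp'.2.symm, h⟩

theorem step' {k s : ℕ} (U : Finset (Fin k × Fin s)) (n m : ℕ) (hU : U.card ≤ n)
    (T : Finset (Fin k)) (hT : T.card = 3) (g : Fin k → Fin s)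
    (hg : transversalOf g ⊆ U) :
    {f : Fin k → Fin s |
      (∀ i ∈ T, f i = g i) ∧ (U ∩ transversalOf f).card = m}.ncard
      ≤ s ^ (k - m) * Nat.choose n (m - 3) := by
  classical
  refine le_trans (le_of_eq ?_) (step U n m hU T hT g (fun i _ => hg ((mem_tr _ _).2 rfl)))
  rw [Set.ncard_eq_toFinset_card']
  congr 1
  ext; simp


/-- The number of ordered 4-tuples `(f₁,f₂,f₃,f₄)` of functions `Fin k → Fin s`
whose transversals `S₁,…,S₄` satisfy `|S₁∩S₂∩S₃∩S₄| ≥ 3`, `|S₁∩S₂| = m₁`,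
`|(S₁∪S₂)∩S₃| = m₂` and `|(S₁∪S₂∪S₃)∩S₄| = m₃` is at most
`C(k,3) · s^{4k-m₁-m₂-m₃} · ∏_{j=1}^3 C(jk, mⱼ-3)`. -/
theorem count_clusters_with_profile (k s : ℕ) (hk : 3 ≤ k) (hs : 1 ≤ s)
    (m₁ m₂ m₃ : ℕ) (hm₁ : 3 ≤ m₁) (hm₁' : m₁ ≤ k) (hm₂ : 3 ≤ m₂) (hm₂' : m₂ ≤ k)
    (hm₃ : 3 ≤ m₃) (hm₃' : m₃ ≤ k) :
    {q : (Fin k → Fin s) × (Fin k → Fin s) × (Fin k → Fin s) × (Fin k → Fin s) |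
        3 ≤ (transversalOf q.1 ∩ transversalOf q.2.1 ∩ transversalOf q.2.2.1 ∩
              transversalOf q.2.2.2).card ∧
        (transversalOf q.1 ∩ transversalOf q.2.1).card = m₁ ∧
        ((transversalOf q.1 ∪ transversalOf q.2.1) ∩ transversalOf q.2.2.1).card = m₂ ∧
        ((transversalOf q.1 ∪ transversalOf q.2.1 ∪ transversalOf q.2.2.1) ∩
            transversalOf q.2.2.2).card = m₃}.ncard
      ≤ Nat.choose k 3 * s ^ (4 * k - m₁ - m₂ - m₃) *
          (Nat.choose (1 * k) (m₁ - 3) * Nat.choose (2 * k) (m₂ - 3) *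
            Nat.choose (3 * k) (m₃ - 3)) := by
  classical
  set B := s ^ k * ((s ^ (k - m₁) * Nat.choose (1 * k) (m₁ - 3)) *
    ((s ^ (k - m₂) * Nat.choose (2 * k) (m₂ - 3)) *
      (s ^ (k - m₃) * Nat.choose (3 * k) (m₃ - 3)))) with hB
  let Q : Finset (Fin k) →
      Set ((Fin k → Fin s) × (Fin k → Fin s) × (Fin k → Fin s) × (Fin k → Fin s)) :=
    fun T => {q | True ∧
      (((∀ i ∈ T, q.2.1 i = q.1 i) ∧
        (transversalOf q.1 ∩ transversalOf q.2.1).card = m₁) ∧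
      (((∀ i ∈ T, q.2.2.1 i = q.1 i) ∧
        ((transversalOf q.1 ∪ transversalOf q.2.1) ∩ transversalOf q.2.2.1).card = m₂) ∧
      ((∀ i ∈ T, q.2.2.2 i = q.1 i) ∧
        ((transversalOf q.1 ∪ transversalOf q.2.1 ∪ transversalOf q.2.2.1) ∩
            transversalOf q.2.2.2).card = m₃)))}
  have hQ : ∀ T ∈ (Finset.univ : Finset (Fin k)).powersetCard 3, (Q T).ncard ≤ B := by
    intro T hT
    have hT := (Finset.mem_powersetCard.1 hT).2
    refine pairs (fun _ => True) (fun f₁ (r : (Fin k → Fin s) × (Fin k → Fin s) × (Fin k → Fin s)) => ((∀ i ∈ T, r.1 i = f₁ i) ∧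
        (transversalOf f₁ ∩ transversalOf r.1).card = m₁) ∧
      (((∀ i ∈ T, r.2.1 i = f₁ i) ∧
        ((transversalOf f₁ ∪ transversalOf r.1) ∩ transversalOf r.2.1).card = m₂) ∧
      ((∀ i ∈ T, r.2.2 i = f₁ i) ∧
        ((transversalOf f₁ ∪ transversalOf r.1 ∪ transversalOf r.2.1) ∩
            transversalOf r.2.2).card = m₃))) _ _ ?_ ?_
    · simp [Set.ncard_univ, Nat.card_eq_fintype_card]
    intro f₁ _
    refine pairs (fun f₂ => (∀ i ∈ T, f₂ i = f₁ i) ∧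
        (transversalOf f₁ ∩ transversalOf f₂).card = m₁) (fun f₂ (r : (Fin k → Fin s) × (Fin k → Fin s)) =>
      ((∀ i ∈ T, r.1 i = f₁ i) ∧
        ((transversalOf f₁ ∪ transversalOf f₂) ∩ transversalOf r.1).card = m₂) ∧
      ((∀ i ∈ T, r.2 i = f₁ i) ∧
        ((transversalOf f₁ ∪ transversalOf f₂ ∪ transversalOf r.1) ∩
            transversalOf r.2).card = m₃)) _ _ ?_ ?_
    · exact step' _ _ _ (by rw [card_tr]; omega) T hT f₁ subset_rfl
    intro f₂ _
    have c2 : (transversalOf f₁ ∪ transversalOf f₂).card ≤ 2 * k := by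
      have := Finset.card_union_le (transversalOf f₁) (transversalOf f₂)
      rw [card_tr, card_tr] at this
      omega
    refine pairs (fun f₃ => (∀ i ∈ T, f₃ i = f₁ i) ∧
        ((transversalOf f₁ ∪ transversalOf f₂) ∩ transversalOf f₃).card = m₂) (fun f₃ f₄ =>
      ((∀ i ∈ T, f₄ i = f₁ i) ∧
        ((transversalOf f₁ ∪ transversalOf f₂ ∪ transversalOf f₃) ∩
            transversalOf f₄).card = m₃)) _ _ ?_ ?_
    · exact step' _ _ _ c2 T hT f₁ Finset.subset_union_left
    intro f₃ _
    have c3 : (transversalOf f₁ ∪ transversalOf f₂ ∪ transversalOf f₃).card ≤ 3 * k := by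
      have := Finset.card_union_le (transversalOf f₁ ∪ transversalOf f₂) (transversalOf f₃)
      rw [card_tr] at this
      omega
    exact step' _ _ _ c3 T hT f₁ (Finset.subset_union_left.trans Finset.subset_union_left)
  have hBeq : Nat.choose k 3 * B = Nat.choose k 3 * s ^ (4 * k - m₁ - m₂ - m₃) *
          (Nat.choose (1 * k) (m₁ - 3) * Nat.choose (2 * k) (m₂ - 3) *
            Nat.choose (3 * k) (m₃ - 3)) := by
    have : 4 * k - m₁ - m₂ - m₃ = k + (k - m₁) + (k - m₂) + (k - m₃) := by omega
    rw [hB, this, pow_add, pow_add, pow_add]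
    ring
  rw [← hBeq]
  have hbig : (⋃ T ∈ (Finset.univ : Finset (Fin k)).powersetCard 3, Q T).ncard
      ≤ Nat.choose k 3 * B := by
    refine (Finset.set_ncard_biUnion_le _ _).trans ?_
    refine (Finset.sum_le_card_nsmul _ _ _ hQ).trans ?_
    simp
  refine le_trans (Set.ncard_le_ncard ?_ (Set.toFinite _)) hbig
  rintro ⟨f₁, f₂, f₃, f₄⟩ ⟨h0, h1, h2, h3⟩
  obtain ⟨Y, hY, hYc⟩ := Finset.exists_subset_card_eq h0
  have hYm : ∀ p ∈ Y, f₁ p.1 = p.2 ∧ f₂ p.1 = p.2 ∧ f₃ p.1 = p.2 ∧ f₄ p.1 = p.2 := by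
    intro p hp
    have := hY hp
    simp only [Finset.mem_inter, mem_tr] at this
    tauto
  simp only [Set.mem_iUnion]
  refine ⟨Y.image Prod.fst, ?_, trivial, ⟨?_, h1⟩, ⟨?_, h2⟩, ?_, h3⟩
  · rw [Finset.mem_powersetCard]
    refine ⟨Finset.subset_univ _, ?_⟩
    rw [Finset.card_image_of_injOn, hYc]
    intro p hp q hq hpq
    exact Prod.ext hpq (by rw [← (hYm p hp).1, ← (hYm q hq).1, hpq])
  all_goals
    intro i hi
    obtain ⟨p, hp, rfl⟩ := Finset.mem_image.1 hi
    obtain ⟨a, b, c, d⟩ := hYm p hp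
    simp only [a, b, c, d]
end

section
/- Let k ≥ 3, s ≥ 1 be integers and let S₁, S₂, S₃, S₄ be transversals of Fin k × Fin s. Set m₁ = |S₁ ∩ S₂|, m₂ = |(S₁ ∪ S₂) ∩ S₃| and m₃ = |(S₁ ∪ S₂ ∪ S₃) ∩ S₄|. Then the union of their edge sets satisfies |E(S₁) ∪ E(S₂) ∪ E(S₃) ∪ E(S₄)| ≥ 4·C(k,2) − C(m₁,2) − C(m₂,2) − C(m₃,2). -/
/-- A transversal of `Fin k × Fin s`: a finite set containing exactly one
vertex from each class `V_i = {i} × Fin s`. -/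
def IsTransversal {k s : ℕ} (S : Finset (Fin k × Fin s)) : Prop :=
  ∀ i : Fin k, (S.filter (fun v => v.1 = i)).card = 1

/-- The edge set of a transversal: all 2-element subsets of `S`. -/
def edgeSet {k s : ℕ} (S : Finset (Fin k × Fin s)) : Finset (Finset (Fin k × Fin s)) :=
  S.powersetCard 2

theorem transversal_card {k s : ℕ} {S : Finset (Fin k × Fin s)} (h : IsTransversal S) :
    S.card = k := by
  have := Finset.card_eq_sum_card_fiberwise (f := Prod.fst) (s := S)
    (t := (Finset.univ : Finset (Fin k))) (fun x _ => by simp)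
  rw [this, Finset.sum_congr rfl (fun i _ => h i)]
  simp

theorem union_step {k s : ℕ} {S T : Finset (Fin k × Fin s)}
    {A : Finset (Finset (Fin k × Fin s))} (h : IsTransversal S)
    (hA : ∀ e ∈ A, e ⊆ T) :
    A.card + Nat.choose k 2 ≤ (A ∪ edgeSet S).card + Nat.choose ((T ∩ S).card) 2 := by
  have h1 : (edgeSet S).card = Nat.choose k 2 := by
    rw [edgeSet, Finset.card_powersetCard, transversal_card h]
  have h2 : (A ∩ edgeSet S).card ≤ Nat.choose ((T ∩ S).card) 2 := by
    rw [← Finset.card_powersetCard]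
    apply Finset.card_le_card
    intro e he
    rw [Finset.mem_inter, edgeSet, Finset.mem_powersetCard] at he
    rw [Finset.mem_powersetCard]
    exact ⟨Finset.subset_inter (hA e he.1) he.2.1, he.2.2⟩
  have h3 := Finset.card_union_add_card_inter A (edgeSet S)
  omega

theorem edgeSet_sub {k s : ℕ} {S : Finset (Fin k × Fin s)} :
    ∀ e ∈ edgeSet S, e ⊆ S := fun _ he => (Finset.mem_powersetCard.1 he).1

theorem union_sub {k s : ℕ} {S T : Finset (Fin k × Fin s)}
    {A : Finset (Finset (Fin k × Fin s))} (hA : ∀ e ∈ A, e ⊆ T) :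
    ∀ e ∈ A ∪ edgeSet S, e ⊆ T ∪ S := by
  intro e he
  rcases Finset.mem_union.1 he with h | h
  · exact (hA e h).trans Finset.subset_union_left
  · exact (edgeSet_sub e h).trans Finset.subset_union_right

/-- For transversals `S₁,S₂,S₃,S₄` with `m₁ = |S₁∩S₂|`, `m₂ = |(S₁∪S₂)∩S₃|`,
`m₃ = |(S₁∪S₂∪S₃)∩S₄|`, the union of their edge sets has at least
`4·C(k,2) - C(m₁,2) - C(m₂,2) - C(m₃,2)` elements. -/
theorem edge_union_lower_bound (k s : ℕ) (hk : 3 ≤ k) (hs : 1 ≤ s)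
    (S₁ S₂ S₃ S₄ : Finset (Fin k × Fin s))
    (hS₁ : IsTransversal S₁) (hS₂ : IsTransversal S₂)
    (hS₃ : IsTransversal S₃) (hS₄ : IsTransversal S₄) :
    ((edgeSet S₁ ∪ edgeSet S₂ ∪ edgeSet S₃ ∪ edgeSet S₄).card : ℤ) ≥
      4 * Nat.choose k 2 - Nat.choose ((S₁ ∩ S₂).card) 2
        - Nat.choose (((S₁ ∪ S₂) ∩ S₃).card) 2
        - Nat.choose (((S₁ ∪ S₂ ∪ S₃) ∩ S₄).card) 2 := by
  have h1 : (edgeSet S₁).card = Nat.choose k 2 := by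
    rw [edgeSet, Finset.card_powersetCard, transversal_card hS₁]
  have h2 := union_step hS₂ (edgeSet_sub (S := S₁))
  have h3 := union_step hS₃ (union_sub (S := S₂) (edgeSet_sub (S := S₁)))
  have h4 := union_step hS₄ (union_sub (S := S₃) (union_sub (S := S₂) (edgeSet_sub (S := S₁))))
  omega
end

section
/- Let k ≥ 3 and s ≥ 1 be integers. The number of 4-element sets {S₁, S₂, S₃, S₄} of pairwise distinct transversals of Fin k × Fin s that form a sunflower (i.e., for which there exists a 3-element set T ⊆ V with S_i ∩ S_j = T for all i ≠ j) is at most C(k,3) · s^{4k − 9}. -/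
/-- The graph of `f`, as a transversal. -/
def gr {k s : ℕ} (f : Fin k → Fin s) : Finset (Fin k × Fin s) :=
  Finset.univ.image (fun i => (i, f i))

theorem mem_gr {k s : ℕ} (f : Fin k → Fin s) (v : Fin k × Fin s) :
    v ∈ gr f ↔ f v.1 = v.2 := by
  unfold gr
  simp only [Finset.mem_image, Finset.mem_univ, true_and]
  constructor
  · rintro ⟨i, rfl⟩; rfl
  · intro h; exact ⟨v.1, by rw [h]⟩

theorem exists_gr {k s : ℕ} (S : Finset (Fin k × Fin s)) (h : IsTransversal S) :
    ∃ f : Fin k → Fin s, S = gr f := by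
  have h' : ∀ i, ∃ v, S.filter (fun v => v.1 = i) = {v} := fun i => Finset.card_eq_one.1 (h i)
  choose v hv using h'
  have key : ∀ i w, (w ∈ S ∧ w.1 = i) ↔ w = v i := by
    intro i w
    have := congrArg (fun X => w ∈ X) (hv i)
    simpa using this
  refine ⟨fun i => (v i).2, ?_⟩
  ext w
  rw [mem_gr]
  constructor
  · intro hw
    have := (key w.1 w).1 ⟨hw, rfl⟩
    exact (congrArg Prod.snd this).symm
  · intro hw
    have h1 := (key w.1 (v w.1)).2 rfl
    have : w = v w.1 := Prod.ext h1.2.symm hw.symm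
    rw [this]; exact h1.1

/-- Glue a kernel and four petals into a family of transversals. -/
def glue {k s : ℕ} (I : Finset (Fin k))
    (d : ({i // i ∈ I} → Fin s) × (Fin 4 → {i // i ∉ I} → Fin s)) :
    Finset (Finset (Fin k × Fin s)) :=
  Finset.univ.image (fun j : Fin 4 =>
    gr (fun i => if h : i ∈ I then d.1 ⟨i, h⟩ else d.2 j ⟨i, h⟩))

theorem count_sunflowers (k s : ℕ) (hk : 3 ≤ k) (hs : 1 ≤ s) :
    {A : Finset (Finset (Fin k × Fin s)) |
        A.card = 4 ∧ (∀ S ∈ A, IsTransversal S) ∧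
        ∃ T : Finset (Fin k × Fin s), T.card = 3 ∧
          ∀ S₁ ∈ A, ∀ S₂ ∈ A, S₁ ≠ S₂ → S₁ ∩ S₂ = T}.ncard
      ≤ Nat.choose k 3 * s ^ (4 * k - 9) := by
  classical
  let B : Finset (Finset (Finset (Fin k × Fin s))) :=
    (Finset.powersetCard 3 (Finset.univ : Finset (Fin k))).biUnion
      (fun I => Finset.univ.image (glue (s := s) I))
  have hB : B.card ≤ Nat.choose k 3 * s ^ (4 * k - 9) := by
    have h1 := Finset.card_biUnion_le_card_mul
      (Finset.powersetCard 3 (Finset.univ : Finset (Fin k)))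
      (fun I => Finset.univ.image (glue (s := s) I)) (s ^ (4 * k - 9)) (by
        intro I hI
        have hI3 : I.card = 3 := (Finset.mem_powersetCard.1 hI).2
        refine Finset.card_image_le.trans (le_of_eq ?_)
        have hc : Fintype.card {i // i ∉ I} = k - 3 := by
          rw [Fintype.card_subtype_compl]; simp [hI3]
        rw [Finset.card_univ, Fintype.card_prod, Fintype.card_fun, Fintype.card_fun,
          Fintype.card_fun, hc, Fintype.card_fin, Fintype.card_fin, Fintype.card_coe, hI3,
          ← pow_mul, ← pow_add]
        congr 1
        omega)
    simpa using h1
  refine le_trans ?_ hB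
  rw [← Set.ncard_coe_finset]
  refine Set.ncard_le_ncard ?_ (Finset.finite_toSet B)
  rintro A ⟨hA, htr, T, hT, hsun⟩
  have hsub : ∀ S ∈ A, T ⊆ S := by
    intro S hS
    obtain ⟨S', hS', hne⟩ := Finset.exists_mem_ne (by omega : 1 < A.card) S
    rw [← hsun S hS S' hS' hne.symm]
    exact Finset.inter_subset_left
  have e := A.equivFinOfCardEq hA
  have hg : ∀ j : Fin 4, ∃ f : Fin k → Fin s, ((e.symm j : A) : Finset _) = gr f :=
    fun j => exists_gr _ (htr _ (e.symm j).2)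
  choose f hf using hg
  have hTf : ∀ j, ∀ v ∈ T, f j v.1 = v.2 := by
    intro j v hv
    have := hsub _ (e.symm j).2 hv
    rw [hf j] at this
    exact (mem_gr _ _).1 this
  have hI3 : (T.image Prod.fst).card = 3 := by
    rw [Finset.card_image_of_injOn, hT]
    intro v hv w hw hvw
    refine Prod.ext hvw ?_
    rw [← hTf 0 v hv, ← hTf 0 w hw, hvw]
  simp only [B, Finset.coe_biUnion, Set.mem_iUnion, Finset.mem_coe]
  refine ⟨T.image Prod.fst, by simp [Finset.mem_powersetCard, hI3], ?_⟩
  rw [Finset.mem_image]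
  refine ⟨(fun i => f 0 i.1, fun j i => f j i.1), Finset.mem_univ _, ?_⟩
  have hfun : ∀ j : Fin 4, (fun i => if h : i ∈ T.image Prod.fst then f 0 i else f j i) = f j := by
    intro j
    funext i
    split_ifs with h
    · obtain ⟨v, hv, rfl⟩ := Finset.mem_image.1 h
      rw [hTf 0 v hv, hTf j v hv]
    · rfl
  ext S
  unfold glue
  rw [Finset.mem_image]
  constructor
  · rintro ⟨j, -, rfl⟩
    have := (e.symm j).2
    rw [hf j, ← hfun j] at this
    exact this
  · intro hS
    refine ⟨e ⟨S, hS⟩, Finset.mem_univ _, ?_⟩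
    have h2 := hf (e ⟨S, hS⟩)
    rw [Equiv.symm_apply_apply, ← hfun] at h2
    exact h2.symm
end

section
/- Let k ≥ 3 and s ≥ 1 be integers, and let 𝒮 be the finite family of all sets of edges of the form F = E(S₁) ∪ E(S₂) ∪ E(S₃) ∪ E(S₄), where {S₁, S₂, S₃, S₄} is a sunflower of transversals of Fin k × Fin s. Then ∑_{F ∈ 𝒮} 2^{−|F|} ≤ C(k,3) · s^{4k − 9} · 2^{−4·C(k,2) + 9}. -/
/-- `S₁,S₂,S₃,S₄` form a sunflower: they are pairwise distinct transversals and
there is a 3-element set `T` with `Sᵢ ∩ Sⱼ = T` for all `i ≠ j`. -/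
def IsSunflower {k s : ℕ} (S₁ S₂ S₃ S₄ : Finset (Fin k × Fin s)) : Prop :=
  IsTransversal S₁ ∧ IsTransversal S₂ ∧ IsTransversal S₃ ∧ IsTransversal S₄ ∧
  S₁ ≠ S₂ ∧ S₁ ≠ S₃ ∧ S₁ ≠ S₄ ∧ S₂ ≠ S₃ ∧ S₂ ≠ S₄ ∧ S₃ ≠ S₄ ∧
  ∃ T : Finset (Fin k × Fin s), T.card = 3 ∧
    S₁ ∩ S₂ = T ∧ S₁ ∩ S₃ = T ∧ S₁ ∩ S₄ = T ∧ S₂ ∩ S₃ = T ∧ S₂ ∩ S₄ = T ∧ S₃ ∩ S₄ = T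

/-- The transversal attached to a function. -/
def graphOf {k s : ℕ} (f : Fin k → Fin s) : Finset (Fin k × Fin s) :=
  Finset.univ.image (fun i => (i, f i))

theorem mem_graphOf {k s : ℕ} (f : Fin k → Fin s) (v : Fin k × Fin s) :
    v ∈ graphOf f ↔ v.2 = f v.1 := by
  obtain ⟨a, b⟩ := v
  simp only [graphOf, Finset.mem_image, Finset.mem_univ, true_and, Prod.mk.injEq]
  constructor
  · rintro ⟨i, rfl, rfl⟩; rfl
  · intro h; exact ⟨a, rfl, h.symm⟩

theorem card_graphOf {k s : ℕ} (f : Fin k → Fin s) : (graphOf f).card = k := by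
  rw [graphOf, Finset.card_image_of_injective _ (fun a b h => (Prod.mk.inj h).1)]
  simp

theorem exists_graphOf {k s : ℕ} {S : Finset (Fin k × Fin s)} (h : IsTransversal S) :
    ∃ f : Fin k → Fin s, S = graphOf f := by
  have h2 : ∀ i : Fin k, ∃ v, S.filter (fun v => v.1 = i) = {v} :=
    fun i => Finset.card_eq_one.1 (h i)
  choose g hg using h2
  have h3 : ∀ i v, (v ∈ S ∧ v.1 = i) ↔ v = g i := by
    intro i v
    rw [← Finset.mem_singleton (b := v) (a := g i), ← hg, Finset.mem_filter]
  refine ⟨fun i => (g i).2, ?_⟩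
  ext v
  rw [mem_graphOf]
  constructor
  · intro hv
    exact congrArg Prod.snd ((h3 v.1 v).1 ⟨hv, rfl⟩)
  · intro hv
    refine ((h3 v.1 v).2 ?_).1
    exact Prod.ext ((h3 v.1 (g v.1)).2 rfl).2.symm hv

theorem edge_inter {k s : ℕ} {S S' T : Finset (Fin k × Fin s)} (h : S ∩ S' = T) :
    edgeSet S ∩ edgeSet S' = edgeSet T := by
  subst h
  ext e
  simp only [edgeSet, Finset.mem_inter, Finset.mem_powersetCard, Finset.subset_inter_iff]
  tauto

theorem card_sunflower {k s : ℕ} {S₁ S₂ S₃ S₄ : Finset (Fin k × Fin s)}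
    (h : IsSunflower S₁ S₂ S₃ S₄) :
    (edgeSet S₁ ∪ edgeSet S₂ ∪ edgeSet S₃ ∪ edgeSet S₄).card + 9 = 4 * Nat.choose k 2 := by
  obtain ⟨t1, t2, t3, t4, -, -, -, -, -, -, T, hT, h12, h13, h14, h23, h24, h34⟩ := h
  have hc : ∀ S : Finset (Fin k × Fin s), IsTransversal S → (edgeSet S).card = k.choose 2 := by
    intro S hS
    obtain ⟨f, rfl⟩ := exists_graphOf hS
    rw [edgeSet, Finset.card_powersetCard, card_graphOf]
  have hcT : (edgeSet T).card = 3 := by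
    rw [edgeSet, Finset.card_powersetCard, hT]; rfl
  have e1 := Finset.card_union_add_card_inter (edgeSet S₁) (edgeSet S₂)
  have e2 := Finset.card_union_add_card_inter (edgeSet S₁ ∪ edgeSet S₂) (edgeSet S₃)
  have e3 := Finset.card_union_add_card_inter (edgeSet S₁ ∪ edgeSet S₂ ∪ edgeSet S₃) (edgeSet S₄)
  simp only [Finset.union_inter_distrib_right, edge_inter h12, edge_inter h13, edge_inter h14,
    edge_inter h23, edge_inter h24, edge_inter h34, Finset.union_self, hcT, hc _ t1, hc _ t2,
    hc _ t3, hc _ t4] at e1 e2 e3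
  omega

/-- The `j`-th function encoded by a code `c`. -/
def decodeFun {k s : ℕ} (A : Finset (Fin k))
    (c : {i // i ∈ A} ⊕ (Fin 4 × {i // i ∉ A}) → Fin s) (j : Fin 4) : Fin k → Fin s :=
  fun i => if h : i ∈ A then c (Sum.inl ⟨i, h⟩) else c (Sum.inr (j, ⟨i, h⟩))

/-- The edge set encoded by a code `c`. -/
def decodeSet {k s : ℕ} (A : Finset (Fin k))
    (c : {i // i ∈ A} ⊕ (Fin 4 × {i // i ∉ A}) → Fin s) : Finset (Finset (Fin k × Fin s)) :=
  edgeSet (graphOf (decodeFun A c 0)) ∪ edgeSet (graphOf (decodeFun A c 1)) ∪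
    edgeSet (graphOf (decodeFun A c 2)) ∪ edgeSet (graphOf (decodeFun A c 3))

theorem sunflower_decode {k s : ℕ} {S₁ S₂ S₃ S₄ : Finset (Fin k × Fin s)}
    (h : IsSunflower S₁ S₂ S₃ S₄) :
    ∃ A : Finset (Fin k), A.card = 3 ∧ ∃ c,
      decodeSet A c = edgeSet S₁ ∪ edgeSet S₂ ∪ edgeSet S₃ ∪ edgeSet S₄ := by
  obtain ⟨t1, t2, t3, t4, -, -, -, -, -, -, T, hT, h12, h13, h14, h23, h24, h34⟩ := h
  obtain ⟨f1, rfl⟩ := exists_graphOf t1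
  obtain ⟨f2, rfl⟩ := exists_graphOf t2
  obtain ⟨f3, rfl⟩ := exists_graphOf t3
  obtain ⟨f4, rfl⟩ := exists_graphOf t4
  have m1 : ∀ v ∈ T, v.2 = f1 v.1 := fun v hv =>
    (mem_graphOf _ _).1 (Finset.mem_inter.1 (h12 ▸ hv)).1
  have m2 : ∀ v ∈ T, v.2 = f2 v.1 := fun v hv =>
    (mem_graphOf _ _).1 (Finset.mem_inter.1 (h12 ▸ hv)).2
  have m3 : ∀ v ∈ T, v.2 = f3 v.1 := fun v hv =>
    (mem_graphOf _ _).1 (Finset.mem_inter.1 (h13 ▸ hv)).2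
  have m4 : ∀ v ∈ T, v.2 = f4 v.1 := fun v hv =>
    (mem_graphOf _ _).1 (Finset.mem_inter.1 (h14 ▸ hv)).2
  refine ⟨T.image Prod.fst, ?_, Sum.elim (fun i => f1 i.1)
    (fun p => (![f1, f2, f3, f4] p.1) p.2.1), ?_⟩
  · rw [Finset.card_image_of_injOn, hT]
    intro v hv w hw hvw
    exact Prod.ext hvw (by rw [m1 v hv, m1 w hw]; exact congrArg f1 hvw)
  · have key : ∀ (j : Fin 4) (f : Fin k → Fin s), ![f1, f2, f3, f4] j = f →
        (∀ v ∈ T, v.2 = f v.1) →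
        decodeFun (T.image Prod.fst) (Sum.elim (fun i => f1 i.1)
          (fun p => (![f1, f2, f3, f4] p.1) p.2.1)) j = f := by
      intro j f hj hf
      funext i
      unfold decodeFun
      split_ifs with hi
      · obtain ⟨v, hv, rfl⟩ := Finset.mem_image.1 hi
        simp only [Sum.elim_inl]
        rw [← m1 v hv, hf v hv]
      · simp only [Sum.elim_inr, hj]
    unfold decodeSet
    rw [key 0 f1 rfl m1, key 1 f2 rfl m2, key 2 f3 rfl m3, key 3 f4 rfl m4]

/-- The sum of `2^{-|F|}` over all edge sets `F = E(S₁) ∪ E(S₂) ∪ E(S₃) ∪ E(S₄)`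
of sunflowers is at most `C(k,3) · s^{4k-9} · 2^{-4·C(k,2)+9}`. -/
theorem potential_of_sunflowers (k s : ℕ) (hk : 3 ≤ k) (hs : 1 ≤ s) :
    ∑ᶠ F ∈ {F : Finset (Finset (Fin k × Fin s)) |
        ∃ S₁ S₂ S₃ S₄, IsSunflower S₁ S₂ S₃ S₄ ∧
          F = edgeSet S₁ ∪ edgeSet S₂ ∪ edgeSet S₃ ∪ edgeSet S₄},
        (2 : ℝ) ^ (-(F.card : ℝ))
      ≤ (Nat.choose k 3 : ℝ) * (s : ℝ) ^ (4 * k - 9) *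
        (2 : ℝ) ^ (-(4 * (Nat.choose k 2 : ℝ)) + 9) := by
  classical
  set X : Set (Finset (Finset (Fin k × Fin s))) := {F |
        ∃ S₁ S₂ S₃ S₄, IsSunflower S₁ S₂ S₃ S₄ ∧
          F = edgeSet S₁ ∪ edgeSet S₂ ∪ edgeSet S₃ ∪ edgeSet S₄} with hX
  have hfin : X.Finite := Set.toFinite X
  rw [finsum_mem_eq_finite_toFinset_sum _ hfin]
  have hval : ∀ F ∈ hfin.toFinset, (2 : ℝ) ^ (-(F.card : ℝ)) =
      (2 : ℝ) ^ (-(4 * (Nat.choose k 2 : ℝ)) + 9) := by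
    intro F hF
    obtain ⟨S₁, S₂, S₃, S₄, h, rfl⟩ := hfin.mem_toFinset.1 hF
    have h2 := card_sunflower h
    have h3 : ((edgeSet S₁ ∪ edgeSet S₂ ∪ edgeSet S₃ ∪ edgeSet S₄).card : ℝ) + 9
        = 4 * (Nat.choose k 2 : ℝ) := by exact_mod_cast h2
    congr 1
    linarith
  rw [Finset.sum_congr rfl hval, Finset.sum_const, nsmul_eq_mul]
  refine mul_le_mul_of_nonneg_right ?_ (by positivity)
  have hsub : hfin.toFinset ⊆ (Finset.univ.powersetCard 3 : Finset (Finset (Fin k))).biUnion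
      (fun A => Finset.univ.image (decodeSet (s := s) A)) := by
    intro F hF
    obtain ⟨S₁, S₂, S₃, S₄, h, rfl⟩ := hfin.mem_toFinset.1 hF
    obtain ⟨A, hA, c, hc⟩ := sunflower_decode h
    refine Finset.mem_biUnion.2 ⟨A, Finset.mem_powersetCard.2 ⟨Finset.subset_univ _, hA⟩, ?_⟩
    exact Finset.mem_image.2 ⟨c, Finset.mem_univ _, hc⟩
  have hcard : hfin.toFinset.card ≤ Nat.choose k 3 * s ^ (4 * k - 9) := by
    refine (Finset.card_le_card hsub).trans ?_
    refine (Finset.card_biUnion_le_card_mul _ _ (s ^ (4 * k - 9)) ?_).trans ?_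
    · intro A hA
      have hA3 : A.card = 3 := (Finset.mem_powersetCard.1 hA).2
      refine Finset.card_image_le.trans (le_of_eq ?_)
      have hc : Fintype.card {i // i ∉ A} = k - 3 := by
        rw [Fintype.card_subtype_compl, Fintype.card_fin, Fintype.card_coe, hA3]
      rw [Finset.card_univ, Fintype.card_fun, Fintype.card_sum, Fintype.card_prod, hc,
        Fintype.card_coe, hA3, Fintype.card_fin, Fintype.card_fin]
      congr 1
      omega
    · rw [Finset.card_powersetCard, Finset.card_univ, Fintype.card_fin]
  exact_mod_cast hcard
end

section
/- There exists K such that for every integer k ≥ K, every j ∈ {1, 2, 3} and every integer m with 3 ≤ m ≤ k, one has C(jk, m − 3) · (2^{−(k+9)/2})^{m−3} · 2^{m(m−1)/2 − 3} ≤ 1, where the powers of 2 are real powers and C(a,b) denotes the binomial coefficient. -/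
lemma aux_pow (k : ℕ) (hk : 21 ≤ k) : (3 * k) ^ 2 ≤ 2 ^ (k - 2) := by
  induction k, hk using Nat.le_induction with
  | base => norm_num
  | succ n hn ih =>
    have h : n + 1 - 2 = (n - 2) + 1 := by omega
    rw [h, pow_succ 2]
    nlinarith

lemma le_of_sq_le_one_aux {x : ℝ} (h : x ^ 2 ≤ 1) : x ≤ 1 := by
  nlinarith [sq_nonneg (x - 1)]

lemma aux_choose (k j t s : ℕ) (hk : 21 ≤ k) (hj : j ≤ 3) (hs : 3 ≤ s) (hts : t + s = k) :
    (Nat.choose (j * k) t) ^ 2 ≤ 2 ^ (t * (s + 4)) := by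
  have hjk : j * k ≤ 3 * k := Nat.mul_le_mul_right k hj
  by_cases h : t ≤ 6
  · calc (Nat.choose (j * k) t) ^ 2 ≤ ((3 * k) ^ t) ^ 2 := by
          gcongr
          exact (Nat.choose_le_pow _ _).trans (Nat.pow_le_pow_left hjk t)
      _ = ((3 * k) ^ 2) ^ t := by rw [← pow_mul, ← pow_mul, mul_comm t 2]
      _ ≤ (2 ^ (k - 2)) ^ t := by
          exact Nat.pow_le_pow_left (aux_pow k hk) t
      _ ≤ (2 ^ (s + 4)) ^ t := by
          gcongr
          · norm_num
          · omega
      _ = 2 ^ (t * (s + 4)) := by rw [← pow_mul, mul_comm]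
  · calc (Nat.choose (j * k) t) ^ 2 ≤ (2 ^ (3 * k)) ^ 2 := by
          gcongr
          exact (Nat.choose_le_two_pow _ _).trans (Nat.pow_le_pow_right (by norm_num) hjk)
      _ = 2 ^ (6 * k) := by rw [← pow_mul]; ring_nf
      _ ≤ 2 ^ (t * (s + 4)) := by
          apply Nat.pow_le_pow_right (by norm_num)
          obtain ⟨a, rfl⟩ : ∃ a, t = a + 7 := ⟨t - 7, by omega⟩
          obtain ⟨b, rfl⟩ : ∃ b, s = b + 3 := ⟨s - 3, by omega⟩
          subst hts
          nlinarith [Nat.zero_le (a * b)]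

/-- For all large enough `k`, all `j ∈ {1,2,3}` and all `3 ≤ m ≤ k`:
`C(jk, m-3) · (2^{-(k+9)/2})^{m-3} · 2^{m(m-1)/2 - 3} ≤ 1`. -/
theorem g_le_one :
    ∃ K : ℕ, ∀ k : ℕ, K ≤ k → ∀ j ∈ ({1, 2, 3} : Finset ℕ),
      ∀ m : ℕ, 3 ≤ m → m ≤ k →
        (Nat.choose (j * k) (m - 3) : ℝ) *
          ((2 : ℝ) ^ (-((k : ℝ) + 9) / 2)) ^ (m - 3) *
          (2 : ℝ) ^ ((m : ℝ) * ((m : ℝ) - 1) / 2 - 3) ≤ 1 := by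
  refine ⟨21, fun k hk j hj m hm hmk => ?_⟩
  have hj3 : j ≤ 3 := by
    simp only [Finset.mem_insert, Finset.mem_singleton] at hj
    omega
  obtain ⟨t, rfl⟩ : ∃ t, m = t + 3 := ⟨m - 3, by omega⟩
  obtain ⟨s, hs⟩ : ∃ s, t + s = k := ⟨k - t, by omega⟩
  have hc := aux_choose k j t s hk hj3 (by omega) hs
  rw [Nat.add_sub_cancel]
  have hcr : (Nat.choose (j * k) t : ℝ) ^ 2 ≤ 2 ^ (t * (s + 4)) := by exact_mod_cast hc
  have hks : (k : ℝ) = t + s := by rw [← hs]; push_cast; ring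
  have hE : ((2 : ℝ) ^ (-((k : ℝ) + 9) / 2)) ^ t *
      (2 : ℝ) ^ (((t + 3 : ℕ) : ℝ) * (((t + 3 : ℕ) : ℝ) - 1) / 2 - 3)
      = (2 : ℝ) ^ (-((t * (s + 4) : ℕ) : ℝ) / 2) := by
    rw [← Real.rpow_mul_natCast (by norm_num), ← Real.rpow_add (by norm_num), hks]
    congr 1
    push_cast
    ring
  rw [mul_assoc, hE]
  have h2 : ((2 : ℝ) ^ (-((t * (s + 4) : ℕ) : ℝ) / 2)) ^ 2 * 2 ^ (t * (s + 4)) = 1 := by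
    rw [← Real.rpow_mul_natCast (by norm_num), ← Real.rpow_natCast 2 (t * (s + 4)),
      ← Real.rpow_add (by norm_num)]
    rw [← Real.rpow_zero 2]
    congr 1
    push_cast
    ring
  apply le_of_sq_le_one_aux
  rw [mul_pow, ← h2, mul_comm]
  exact mul_le_mul_of_nonneg_left hcr (sq_nonneg _)
end

section
/- There exists K such that the following holds for every integer k ≥ K and every integer s with (s : ℝ) ≥ 2^{(k+9)/2}: letting ℱ₂⁴ denote the family of all clusters of transversals of Fin k × Fin s, one has ∑_{F ∈ ℱ₂⁴} 2^{−|F|} ≤ k³ · C(k,3) · s^{4k−9} · 2^{−4·C(k,2) + 9}. -/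
/-- `F` is a cluster: it is the union of the edge sets of four pairwise
distinct transversals whose edge sets share at least two elements. -/
def IsCluster {k s : ℕ} (F : Finset (Finset (Fin k × Fin s))) : Prop :=
  ∃ S₁ S₂ S₃ S₄ : Finset (Fin k × Fin s),
    IsTransversal S₁ ∧ IsTransversal S₂ ∧ IsTransversal S₃ ∧ IsTransversal S₄ ∧
    S₁ ≠ S₂ ∧ S₁ ≠ S₃ ∧ S₁ ≠ S₄ ∧ S₂ ≠ S₃ ∧ S₂ ≠ S₄ ∧ S₃ ≠ S₄ ∧
    2 ≤ (edgeSet S₁ ∩ edgeSet S₂ ∩ edgeSet S₃ ∩ edgeSet S₄).card ∧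
    F = edgeSet S₁ ∪ edgeSet S₂ ∪ edgeSet S₃ ∪ edgeSet S₄

/-- The graph of a function, as a transversal. -/
def grph {k s : ℕ} (f : Fin k → Fin s) : Finset (Fin k × Fin s) :=
  Finset.univ.image (fun i => (i, f i))

lemma mem_grph {k s : ℕ} (f : Fin k → Fin s) (v : Fin k × Fin s) :
    v ∈ grph f ↔ f v.1 = v.2 := by
  unfold grph
  simp only [Finset.mem_image, Finset.mem_univ, true_and]
  constructor
  · rintro ⟨i, rfl⟩; rfl
  · intro h; exact ⟨v.1, by rw [h]⟩

lemma card_grph {k s : ℕ} (f : Fin k → Fin s) : (grph f).card = k := by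
  unfold grph
  rw [Finset.card_image_of_injective]
  · simp
  · intro a b h; exact (Prod.mk.inj h).1

lemma exists_grph {k s : ℕ} {S : Finset (Fin k × Fin s)} (h : IsTransversal S) :
    ∃ f, S = grph f := by
  have h1 : ∀ i : Fin k, ∃ v, S.filter (fun v => v.1 = i) = {v} := fun i =>
    Finset.card_eq_one.mp (h i)
  choose v hv using h1
  have hmem : ∀ i, v i ∈ S ∧ (v i).1 = i := fun i => by
    have : v i ∈ S.filter (fun v => v.1 = i) := by rw [hv]; simp
    simpa using this
  refine ⟨fun i => (v i).2, ?_⟩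
  ext w
  rw [mem_grph]
  constructor
  · intro hw
    have : w ∈ S.filter (fun v => v.1 = w.1) := by simp [hw]
    rw [hv] at this
    rw [Finset.mem_singleton] at this
    exact congrArg Prod.snd this.symm
  · intro hw
    have : w = v w.1 := Prod.ext (hmem w.1).2.symm hw.symm
    rw [this]; exact (hmem w.1).1

/-- Coordinates where `f` agrees with a member of `P`. -/
def agr {k s : ℕ} (P : Finset (Fin k → Fin s)) (f : Fin k → Fin s) : Finset (Fin k) :=
  Finset.univ.filter (fun i => ∃ b ∈ P, f i = b i)

/-- Functions agreeing with `g` on `A`. -/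
def Ag {k s : ℕ} (A : Finset (Fin k)) (g : Fin k → Fin s) : Finset (Fin k → Fin s) :=
  Finset.univ.filter (fun f => ∀ i ∈ A, f i = g i)

lemma arith1 (N n s : ℕ) (hn : n ≤ N) (hs : 2 ^ (N + 12) ≤ s ^ 2) :
    N.choose n * 3 ^ n * 2 ^ ((n + 3).choose 2) ≤ 8 * s ^ n := by
  obtain ⟨p, rfl⟩ := Nat.exists_eq_add_of_le hn
  have key : ((n + p).choose n) ^ 2 * 9 ^ n ≤ 2 ^ (n * (p + 7)) := by
    rcases Nat.eq_zero_or_pos p with rfl | hp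
    · simp only [Nat.add_zero, Nat.choose_self, one_pow, one_mul]
      rw [mul_comm, pow_mul]
      exact Nat.pow_le_pow_left (by norm_num) n
    · rcases le_or_gt p n with h | h
      · have h1 : (n + p).choose n ≤ 4 ^ n := by
          calc (n + p).choose n ≤ 2 ^ (n + p) := Nat.choose_le_two_pow _ _
            _ ≤ 2 ^ (2 * n) := Nat.pow_le_pow_right (by norm_num) (by omega)
            _ = 4 ^ n := by rw [pow_mul]; norm_num
        calc ((n + p).choose n) ^ 2 * 9 ^ n ≤ (4 ^ n) ^ 2 * 9 ^ n := by gcongr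
          _ = 144 ^ n := by rw [← pow_mul, mul_comm n 2, pow_mul, ← mul_pow]; norm_num
          _ ≤ 256 ^ n := Nat.pow_le_pow_left (by norm_num) n
          _ = 2 ^ (n * 8) := by rw [mul_comm, pow_mul]; norm_num
          _ ≤ 2 ^ (n * (p + 7)) := Nat.pow_le_pow_right (by norm_num)
            (Nat.mul_le_mul_left _ (by omega))
      · have h1 : (n + p).choose n ≤ (2 * p) ^ n := by
          calc (n + p).choose n ≤ (n + p) ^ n := Nat.choose_le_pow _ _
            _ ≤ (2 * p) ^ n := Nat.pow_le_pow_left (by omega) n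
        have h2 : ∀ q : ℕ, q ^ 2 ≤ 2 * 2 ^ q := by
          intro q
          induction q with
          | zero => norm_num
          | succ q ih =>
            rcases le_or_gt q 2 with h | h
            · interval_cases q <;> norm_num
            · rw [pow_succ 2 q]; nlinarith
        calc ((n + p).choose n) ^ 2 * 9 ^ n ≤ ((2 * p) ^ n) ^ 2 * 9 ^ n := by gcongr
          _ = (36 * p ^ 2) ^ n := by
            rw [← pow_mul, mul_comm n 2, pow_mul, ← mul_pow]; congr 1; ring
          _ ≤ (2 ^ (p + 7)) ^ n := by
            apply Nat.pow_le_pow_left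
            have := h2 p
            rw [pow_add]; norm_num; omega
          _ = 2 ^ (n * (p + 7)) := by rw [← pow_mul, mul_comm]
  have hc : ∃ c, (n + 3).choose 2 = c + 3 ∧ 2 * c = n ^ 2 + 5 * n := by
    have h2 : (n + 3).choose 2 * 2 = (n + 3) * (n + 2) := by
      rw [Nat.choose_two_right]
      exact Nat.div_mul_cancel (Nat.even_mul_pred_self (n + 3)).two_dvd
    refine ⟨(n + 3).choose 2 - 3, ?_, ?_⟩
    · have : 3 ≤ (n + 3).choose 2 := by nlinarith
      omega
    · have : 3 ≤ (n + 3).choose 2 := by nlinarith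
      have h3 : (n + 3) * (n + 2) = n ^ 2 + 5 * n + 6 := by ring
      omega
  obtain ⟨c, hc1, hc2⟩ := hc
  have main : (n + p).choose n * 3 ^ n * 2 ^ c ≤ s ^ n := by
    rw [← Nat.pow_le_pow_iff_left (n := 2) (by norm_num)]
    calc ((n + p).choose n * 3 ^ n * 2 ^ c) ^ 2
        = ((n + p).choose n) ^ 2 * 9 ^ n * 2 ^ (2 * c) := by
          rw [mul_pow, mul_pow, ← pow_mul, ← pow_mul, mul_comm n 2, pow_mul 3, mul_comm c 2]
          norm_num
      _ ≤ 2 ^ (n * (p + 7)) * 2 ^ (2 * c) := by gcongr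
      _ = (2 ^ (n + p + 12)) ^ n := by
          rw [← pow_add, ← pow_mul, hc2]; congr 1; ring
      _ ≤ (s ^ 2) ^ n := Nat.pow_le_pow_left hs n
      _ = (s ^ n) ^ 2 := by rw [← pow_mul, ← pow_mul, mul_comm]
  rw [hc1, pow_add]
  calc _ = 8 * ((n + p).choose n * 3 ^ n * 2 ^ c) := by ring
    _ ≤ _ := by gcongr

lemma fiber_card {k s : ℕ} (P : Finset (Fin k → Fin s)) (hP : P.card ≤ 3)
    (g : Fin k → Fin s) (A N : Finset (Fin k)) (hA : A.card = 3) (hN : N ⊆ Aᶜ) :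
    ((Ag A g).filter (fun f => agr P f \ A = N)).card ≤ 3 ^ N.card * s ^ (k - 3 - N.card) := by
  have hdis : Disjoint A N := by
    rw [Finset.disjoint_left]; intro i hi hi'
    have := hN hi'
    simp at this; exact this hi
  have hsub : (Ag A g).filter (fun f => agr P f \ A = N) ⊆
      Fintype.piFinset (fun i => if i ∈ A then {g i} else
        if i ∈ N then P.image (fun b => b i) else Finset.univ) := by
    intro f hf
    simp only [Ag, Finset.mem_filter, Finset.mem_univ, true_and] at hf
    obtain ⟨h1, h2⟩ := hf
    rw [Fintype.mem_piFinset]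
    intro i
    by_cases hi : i ∈ A
    · simp [hi, h1 i hi]
    · by_cases hi' : i ∈ N
      · have h3 := hi'
        rw [← h2] at h3
        simp only [agr, Finset.mem_sdiff, Finset.mem_filter, Finset.mem_univ, true_and] at h3
        obtain ⟨⟨b, hb, hfb⟩, _⟩ := h3
        simp only [hi, hi', if_true, if_false, Finset.mem_image]
        exact ⟨b, hb, hfb.symm⟩
      · simp [hi, hi']
  refine (Finset.card_le_card hsub).trans ?_
  rw [Fintype.card_piFinset]
  calc _ ≤ ∏ i : Fin k, (if i ∈ A then 1 else if i ∈ N then 3 else s) := by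
        apply Finset.prod_le_prod'
        intro i _
        split_ifs
        · simp
        · exact Finset.card_image_le.trans hP
        · simp
    _ = 3 ^ N.card * s ^ (k - 3 - N.card) := by
        rw [Finset.prod_ite, Finset.prod_ite]
        simp only [Finset.prod_const, one_pow, one_mul]
        have e1 : (Finset.univ.filter (fun i => i ∉ A)).filter (fun i => i ∈ N) = N := by
          ext i; simp only [Finset.mem_filter, Finset.mem_univ, true_and]
          exact ⟨fun h => h.2, fun h => ⟨by simpa using hN h, h⟩⟩
        have e2 : (Finset.univ.filter (fun i => i ∉ A)).filter (fun i => i ∉ N) = (A ∪ N)ᶜ := by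
          ext i; simp
        rw [e1, e2, Finset.card_compl, Finset.card_union_of_disjoint hdis, hA, Fintype.card_fin,
          Nat.sub_sub]

lemma step_bound {k s : ℕ} (hs : 2 ^ (k + 9) ≤ s ^ 2) (P : Finset (Fin k → Fin s))
    (hP : P.card ≤ 3) (g : Fin k → Fin s) (hg : g ∈ P) (A : Finset (Fin k)) (hA : A.card = 3) :
    ∑ f ∈ Ag A g, 2 ^ ((agr P f).card.choose 2) ≤ k * (8 * s ^ (k - 3)) := by
  have hk : 3 ≤ k := by
    have := Finset.card_le_univ A
    simpa [hA] using this
  have hAc : (Aᶜ).card = k - 3 := by rw [Finset.card_compl, hA, Fintype.card_fin]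
  rw [← Finset.sum_fiberwise_of_maps_to (s := Ag A g) (t := (Aᶜ).powerset)
    (g := fun f => agr P f \ A)]
  · calc _ ≤ ∑ N ∈ (Aᶜ).powerset,
          (3 ^ N.card * s ^ (k - 3 - N.card)) * 2 ^ ((N.card + 3).choose 2) := by
          apply Finset.sum_le_sum
          intro N hN
          rw [Finset.mem_powerset] at hN
          calc _ ≤ ∑ f ∈ (Ag A g).filter (fun f => agr P f \ A = N),
                  2 ^ ((N.card + 3).choose 2) := by
                apply Finset.sum_le_sum
                intro f hf
                rw [Finset.mem_filter] at hf
                apply Nat.pow_le_pow_right (by norm_num)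
                apply Nat.choose_le_choose
                rw [← hf.2, ← hA]
                exact Finset.card_le_card_sdiff_add_card
            _ ≤ _ := by
                rw [Finset.sum_const, smul_eq_mul]
                exact Nat.mul_le_mul_right _ (fiber_card P hP g A N hA hN)
      _ = ∑ n ∈ Finset.range (k - 3 + 1), (k - 3).choose n •
            ((3 ^ n * s ^ (k - 3 - n)) * 2 ^ ((n + 3).choose 2)) := by
          rw [← hAc]
          exact Finset.sum_powerset_apply_card
            (fun n => (3 ^ n * s ^ ((Aᶜ).card - n)) * 2 ^ ((n + 3).choose 2))
      _ ≤ ∑ n ∈ Finset.range (k - 3 + 1), 8 * s ^ (k - 3) := by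
          apply Finset.sum_le_sum
          intro n hn
          have hn' : n ≤ k - 3 := by rw [Finset.mem_range] at hn; omega
          have := arith1 (k - 3) n s hn' (by
            have : k - 3 + 12 = k + 9 := by omega
            rw [this]; exact hs)
          rw [smul_eq_mul]
          calc _ = ((k - 3).choose n * 3 ^ n * 2 ^ ((n + 3).choose 2)) * s ^ (k - 3 - n) := by ring
            _ ≤ (8 * s ^ n) * s ^ (k - 3 - n) := Nat.mul_le_mul_right _ this
            _ = 8 * s ^ (k - 3) := by
              rw [mul_assoc, ← pow_add]; congr 2; omega
      _ ≤ _ := by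
          rw [Finset.sum_const, smul_eq_mul, Finset.card_range]
          exact Nat.mul_le_mul_right _ (by omega)
  · intro f _
    rw [Finset.mem_powerset]
    intro i hi
    rw [Finset.mem_sdiff] at hi
    simpa using hi.2

lemma inter_card {k s : ℕ} (P : Finset (Fin k → Fin s)) (f : Fin k → Fin s)
    (X : Finset (Finset (Fin k × Fin s))) (hX : ∀ e ∈ X, ∃ b ∈ P, e ∈ edgeSet (grph b)) :
    k.choose 2 + X.card ≤ (X ∪ edgeSet (grph f)).card + (agr P f).card.choose 2 := by
  have h1 := Finset.card_union_add_card_inter X (edgeSet (grph f))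
  have h2 : (edgeSet (grph f)).card = k.choose 2 := by
    unfold edgeSet; rw [Finset.card_powersetCard, card_grph]
  have h3 : (X ∩ edgeSet (grph f)).card ≤ (agr P f).card.choose 2 := by
    have hsub : X ∩ edgeSet (grph f) ⊆
        ((agr P f).image (fun i => (i, f i))).powersetCard 2 := by
      intro e he
      rw [Finset.mem_inter] at he
      obtain ⟨b, hb, heb⟩ := hX e he.1
      have hef := he.2
      unfold edgeSet at heb hef
      rw [Finset.mem_powersetCard] at heb hef ⊢
      refine ⟨fun v hv => ?_, hef.2⟩
      have p1 := (mem_grph b v).1 (heb.1 hv)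
      have p2 := (mem_grph f v).1 (hef.1 hv)
      rw [Finset.mem_image]
      refine ⟨v.1, ?_, by rw [p2]⟩
      simp only [agr, Finset.mem_filter, Finset.mem_univ, true_and]
      exact ⟨b, hb, by rw [p1, p2]⟩
    refine (Finset.card_le_card hsub).trans ?_
    rw [Finset.card_powersetCard]
    exact Nat.choose_le_choose _ Finset.card_image_le
  omega

/-- Union of the four edge sets. -/
def U4 {k s : ℕ} (f₁ f₂ f₃ f₄ : Fin k → Fin s) : Finset (Finset (Fin k × Fin s)) :=
  edgeSet (grph f₁) ∪ edgeSet (grph f₂) ∪ edgeSet (grph f₃) ∪ edgeSet (grph f₄)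

lemma U4_card {k s : ℕ} (f₁ f₂ f₃ f₄ : Fin k → Fin s) :
    4 * k.choose 2 ≤ (U4 f₁ f₂ f₃ f₄).card + ((agr {f₁} f₂).card.choose 2 +
      (agr {f₁, f₂} f₃).card.choose 2 + (agr {f₁, f₂, f₃} f₄).card.choose 2) := by
  have h0 : (edgeSet (grph f₁)).card = k.choose 2 := by
    unfold edgeSet; rw [Finset.card_powersetCard, card_grph]
  have h1 := inter_card {f₁} f₂ (edgeSet (grph f₁)) (by simp)
  have h2 := inter_card {f₁, f₂} f₃ (edgeSet (grph f₁) ∪ edgeSet (grph f₂)) (by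
    intro e he; simpa using he)
  have h3 := inter_card {f₁, f₂, f₃} f₄
    (edgeSet (grph f₁) ∪ edgeSet (grph f₂) ∪ edgeSet (grph f₃)) (by
    intro e he; simpa [or_assoc] using he)
  unfold U4
  omega

lemma cluster_form {k s : ℕ} {F : Finset (Finset (Fin k × Fin s))} (h : IsCluster F) :
    ∃ A : Finset (Fin k), A.card = 3 ∧ ∃ f₁, ∃ f₂ ∈ Ag A f₁, ∃ f₃ ∈ Ag A f₁, ∃ f₄ ∈ Ag A f₁,
      F = U4 f₁ f₂ f₃ f₄ := by
  obtain ⟨S₁, S₂, S₃, S₄, h1, h2, h3, h4, -, -, -, -, -, -, hc, hF⟩ := h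
  obtain ⟨f₁, rfl⟩ := exists_grph h1
  obtain ⟨f₂, rfl⟩ := exists_grph h2
  obtain ⟨f₃, rfl⟩ := exists_grph h3
  obtain ⟨f₄, rfl⟩ := exists_grph h4
  set B : Finset (Fin k) := Finset.univ.filter
    (fun i => f₂ i = f₁ i ∧ f₃ i = f₁ i ∧ f₄ i = f₁ i) with hB
  have hsub : edgeSet (grph f₁) ∩ edgeSet (grph f₂) ∩ edgeSet (grph f₃) ∩ edgeSet (grph f₄) ⊆
      (B.image (fun i => (i, f₁ i))).powersetCard 2 := by
    intro e he
    simp only [Finset.mem_inter, edgeSet, Finset.mem_powersetCard] at he ⊢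
    obtain ⟨⟨⟨⟨a1, a⟩, a2, -⟩, a3, -⟩, a4, -⟩ := he
    refine ⟨fun v hv => ?_, a⟩
    have p1 := (mem_grph _ v).1 (a1 hv)
    have p2 := (mem_grph _ v).1 (a2 hv)
    have p3 := (mem_grph _ v).1 (a3 hv)
    have p4 := (mem_grph _ v).1 (a4 hv)
    rw [Finset.mem_image]
    refine ⟨v.1, ?_, by rw [p1]⟩
    simp [hB, p1, p2, p3, p4]
  have hB3 : 3 ≤ B.card := by
    by_contra hlt
    have h5 := hc.trans (Finset.card_le_card hsub)
    rw [Finset.card_powersetCard] at h5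
    have h6 : (B.image (fun i => (i, f₁ i))).card ≤ 2 := Finset.card_image_le.trans (by omega)
    have h7 := Nat.choose_le_choose 2 h6
    norm_num at h7
    omega
  obtain ⟨A, hAB, hA⟩ := Finset.exists_subset_card_eq hB3
  have hAB' : ∀ i ∈ A, f₂ i = f₁ i ∧ f₃ i = f₁ i ∧ f₄ i = f₁ i := fun i hi => by
    simpa [hB] using hAB hi
  refine ⟨A, hA, f₁, f₂, ?_, f₃, ?_, f₄, ?_, hF⟩
  · simp only [Ag, Finset.mem_filter, Finset.mem_univ, true_and]; exact fun i hi => (hAB' i hi).1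
  · simp only [Ag, Finset.mem_filter, Finset.mem_univ, true_and]; exact fun i hi => (hAB' i hi).2.1
  · simp only [Ag, Finset.mem_filter, Finset.mem_univ, true_and]; exact fun i hi => (hAB' i hi).2.2

/-- The weight of a quadruple. -/
def wt {k s : ℕ} (f₁ f₂ f₃ f₄ : Fin k → Fin s) : ℕ :=
  2 ^ (agr {f₁} f₂).card.choose 2 * (2 ^ (agr {f₁, f₂} f₃).card.choose 2 *
      2 ^ (agr {f₁, f₂, f₃} f₄).card.choose 2)

lemma wt_sum {k s : ℕ} (hs : 2 ^ (k + 9) ≤ s ^ 2) (A : Finset (Fin k)) (hA : A.card = 3)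
    (f₁ : Fin k → Fin s) :
    ∑ f₂ ∈ Ag A f₁, ∑ f₃ ∈ Ag A f₁, ∑ f₄ ∈ Ag A f₁, wt f₁ f₂ f₃ f₄ ≤
      (k * (8 * s ^ (k - 3))) ^ 3 := by
  set L := k * (8 * s ^ (k - 3)) with hL
  unfold wt
  calc _ = ∑ f₂ ∈ Ag A f₁, 2 ^ (agr {f₁} f₂).card.choose 2 *
        ∑ f₃ ∈ Ag A f₁, 2 ^ (agr {f₁, f₂} f₃).card.choose 2 *
        ∑ f₄ ∈ Ag A f₁, 2 ^ (agr {f₁, f₂, f₃} f₄).card.choose 2 := by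
        simp only [Finset.mul_sum]
    _ ≤ ∑ f₂ ∈ Ag A f₁, 2 ^ (agr {f₁} f₂).card.choose 2 *
        ∑ f₃ ∈ Ag A f₁, 2 ^ (agr {f₁, f₂} f₃).card.choose 2 * L := by
        gcongr
        exact step_bound hs _ Finset.card_le_three _ (by simp) A hA
    _ ≤ ∑ f₂ ∈ Ag A f₁, 2 ^ (agr {f₁} f₂).card.choose 2 * (L * L) := by
        gcongr
        rw [← Finset.sum_mul]
        gcongr
        exact step_bound hs _ (Finset.card_le_two.trans (by norm_num)) _ (by simp) A hA
    _ ≤ L * (L * L) := by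
        rw [← Finset.sum_mul]
        gcongr
        exact step_bound hs _ (by simp) _ (by simp) A hA
    _ = L ^ 3 := by ring

/-- For all large enough `k` and all `s` with `s ≥ 2^{(k+9)/2}`, the total
potential of the family of all clusters is at most
`k³ · C(k,3) · s^{4k-9} · 2^{-4C(k,2)+9}`. -/
theorem potential_of_clusters :
    ∃ K : ℕ, ∀ k : ℕ, K ≤ k → ∀ s : ℕ, (s : ℝ) ≥ (2 : ℝ) ^ (((k : ℝ) + 9) / 2) →
      ∑ᶠ F ∈ {F : Finset (Finset (Fin k × Fin s)) | IsCluster F},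
          (2 : ℝ) ^ (-(F.card : ℝ))
        ≤ (k : ℝ) ^ 3 * (Nat.choose k 3 : ℝ) * (s : ℝ) ^ (4 * k - 9) *
            (2 : ℝ) ^ (-(4 * (Nat.choose k 2 : ℝ)) + 9) := by
  classical
  refine ⟨3, fun k hk s hs0 => ?_⟩
  have hs : 2 ^ (k + 9) ≤ s ^ 2 := by
    have h1 : ((2 : ℝ) ^ (((k : ℝ) + 9) / 2)) ^ 2 ≤ (s : ℝ) ^ 2 := by gcongr
    rw [← Real.rpow_natCast, ← Real.rpow_mul (by norm_num)] at h1
    have h2 : ((k : ℝ) + 9) / 2 * ((2 : ℕ) : ℝ) = ((k + 9 : ℕ) : ℝ) := by push_cast; ring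
    rw [h2, Real.rpow_natCast] at h1
    exact_mod_cast h1
  have hfin : {F : Finset (Finset (Fin k × Fin s)) | IsCluster F}.Finite := Set.toFinite _
  rw [finsum_mem_eq_finite_toFinset_sum _ hfin]
  set I := (Finset.powersetCard 3 (Finset.univ : Finset (Fin k))).sigma
    (fun A => (Finset.univ : Finset (Fin k → Fin s)).sigma
      (fun f₁ => Ag A f₁ ×ˢ (Ag A f₁ ×ˢ Ag A f₁))) with hI
  set C : ℝ := ((2 : ℝ) ^ (4 * k.choose 2))⁻¹ with hC
  have hCpos : 0 ≤ C := by positivity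
  have hrhs : (2 : ℝ) ^ (-(4 * (Nat.choose k 2 : ℝ)) + 9) = 2 ^ 9 * C := by
    rw [Real.rpow_add (by norm_num), Real.rpow_neg (by norm_num), hC, ← Real.rpow_natCast,
      ← Real.rpow_natCast]
    push_cast
    ring
  calc ∑ F ∈ hfin.toFinset, (2 : ℝ) ^ (-(F.card : ℝ))
      ≤ ∑ F ∈ I.image (fun x => U4 x.2.1 x.2.2.1 x.2.2.2.1 x.2.2.2.2),
          (2 : ℝ) ^ (-(F.card : ℝ)) := by
        apply Finset.sum_le_sum_of_subset_of_nonneg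
        · intro F hF
          have hF' : IsCluster F := by simpa using hF
          obtain ⟨A, hA, f₁, f₂, h2, f₃, h3, f₄, h4, rfl⟩ := cluster_form hF'
          rw [Finset.mem_image]
          refine ⟨⟨A, f₁, f₂, f₃, f₄⟩, ?_, rfl⟩
          simp [hI, hA, h2, h3, h4]
        · intros; positivity
    _ ≤ ∑ x ∈ I, (2 : ℝ) ^ (-((U4 x.2.1 x.2.2.1 x.2.2.2.1 x.2.2.2.2).card : ℝ)) := by
        apply Finset.sum_image_le_of_nonneg
        intros; positivity
    _ ≤ ∑ x ∈ I, (wt x.2.1 x.2.2.1 x.2.2.2.1 x.2.2.2.2 : ℝ) * C := by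
        apply Finset.sum_le_sum
        rintro ⟨A, f₁, f₂, f₃, f₄⟩ _
        have h1 := U4_card f₁ f₂ f₃ f₄
        have h2 : 2 ^ (4 * k.choose 2) ≤ 2 ^ (U4 f₁ f₂ f₃ f₄).card * wt f₁ f₂ f₃ f₄ := by
          refine (Nat.pow_le_pow_right (by norm_num) h1).trans (le_of_eq ?_)
          unfold wt
          rw [pow_add, pow_add, pow_add, mul_assoc (2 ^ _) (2 ^ _) (2 ^ _)]
        have h3 : (2 : ℝ) ^ (4 * k.choose 2) ≤
            2 ^ (U4 f₁ f₂ f₃ f₄).card * (wt f₁ f₂ f₃ f₄ : ℝ) := by exact_mod_cast h2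
        show (2 : ℝ) ^ (-((U4 f₁ f₂ f₃ f₄).card : ℝ)) ≤ (wt f₁ f₂ f₃ f₄ : ℝ) * C
        rw [Real.rpow_neg (by norm_num), Real.rpow_natCast, hC, ← div_eq_mul_inv,
          le_div_iff₀ (by positivity), inv_mul_le_iff₀ (by positivity)]
        exact h3
    _ = ((∑ x ∈ I, wt x.2.1 x.2.2.1 x.2.2.2.1 x.2.2.2.2 : ℕ) : ℝ) * C := by
        rw [← Finset.sum_mul]; push_cast; rfl
    _ ≤ ((k.choose 3 * (s ^ k * (k * (8 * s ^ (k - 3))) ^ 3) : ℕ) : ℝ) * C := by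
        gcongr
        rw [hI, Finset.sum_sigma]
        calc _ ≤ ∑ A ∈ Finset.powersetCard 3 (Finset.univ : Finset (Fin k)),
              (s ^ k * (k * (8 * s ^ (k - 3))) ^ 3) := by
              apply Finset.sum_le_sum
              intro A hA
              rw [Finset.mem_powersetCard] at hA
              rw [Finset.sum_sigma]
              calc _ ≤ ∑ f₁ : Fin k → Fin s, (k * (8 * s ^ (k - 3))) ^ 3 := by
                    apply Finset.sum_le_sum
                    intro f₁ _
                    rw [Finset.sum_product]
                    simp only [Finset.sum_product]
                    exact wt_sum hs A hA.2 f₁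
                _ = _ := by simp
          _ = _ := by simp
    _ = _ := by
        rw [hrhs]
        have e : 4 * k - 9 = k + 3 * (k - 3) := by omega
        rw [e, pow_add, mul_comm 3 (k - 3), pow_mul]
        push_cast
        ring
end

section
/- For all integers n ≥ 2 and all positive integers k satisfying (n : ℝ) ≥ k · 2^{(k+9)/2} and (n : ℝ) < (k+1) · 2^{(k+10)/2}, one has (k : ℝ) ≥ 2·log₂ n − 2·log₂(log₂ n) − 12. (In particular, if k is the largest integer with n ≥ k·2^{(k+9)/2}, then k ≥ 2 log₂ n − 2 log₂ log₂ n − 12.) -/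
/-- If `n ≥ 2`, `k ≥ 1`, `n ≥ k·2^{(k+9)/2}` and `n < (k+1)·2^{(k+10)/2}`,
then `k ≥ 2 log₂ n - 2 log₂ log₂ n - 12`. -/
theorem k_ge_two_log_sub (n k : ℕ) (hn : 2 ≤ n) (hk : 1 ≤ k)
    (h1 : (n : ℝ) ≥ (k : ℝ) * (2 : ℝ) ^ (((k : ℝ) + 9) / 2))
    (h2 : (n : ℝ) < ((k : ℝ) + 1) * (2 : ℝ) ^ (((k : ℝ) + 10) / 2)) :
    (k : ℝ) ≥ 2 * Real.logb 2 n - 2 * Real.logb 2 (Real.logb 2 n) - 12 := by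
  have hk' : (1 : ℝ) ≤ k := by exact_mod_cast hk
  have hn' : (0 : ℝ) < n := by
    have : 0 < n := by omega
    exact_mod_cast this
  have hp : (0 : ℝ) < (2 : ℝ) ^ (((k : ℝ) + 9) / 2) := by positivity
  have h3 : ((k : ℝ) + 9) / 2 ≤ Real.logb 2 n := by
    rw [Real.le_logb_iff_rpow_le (by norm_num) hn']
    nlinarith
  have h4 : Real.logb 2 n < Real.logb 2 ((k : ℝ) + 1) + ((k : ℝ) + 10) / 2 := by
    have h := Real.logb_lt_logb (b := 2) (by norm_num) hn' h2
    rwa [Real.logb_mul (by positivity) (by positivity),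
      Real.logb_rpow (by norm_num) (by norm_num)] at h
  have h5 : Real.logb 2 (((k : ℝ) + 1) / 2) ≤ Real.logb 2 (Real.logb 2 n) :=
    Real.logb_le_logb_of_le (by norm_num) (by positivity) (by linarith)
  rw [Real.logb_div (by positivity) (by norm_num),
    Real.logb_self_eq_one (by norm_num)] at h5
  linarith
end
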